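/- Let X be a finite symmetric subset of D^k, let d be a positive integer with d ≤ k, and let f : X → ℂ be a symmetric function, i.e. f(τ∘x) = f(x) for all x ∈ X and τ ∈ S_k (so that f induces a well-defined value f(M) on each multiset M ∈ M(X)). Then k!·Σ_{M ∈ M̄_d(X)} f(M) = Σ_{τ ∈ S_k} w̄_d(τ)·Σ_{x ∈ X_τ} f(x). -/

import Mathlib

/-- The multiset `[x_1, …, x_k]` associated to a tuple `(x_1, …, x_k)`. -/
def msetOf {D : Type*} {k : ℕ} (x : Fin k → D) : Multiset D :=
  (List.ofFn x : Multiset D)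

/-- The cycle lengths of a permutation of `Fin k`, with fixed points counted
as cycles of length 1. -/
def fullCycleType {k : ℕ} (τ : Equiv.Perm (Fin k)) : Multiset ℕ :=
  τ.cycleType + Multiset.replicate (k - τ.support.card) 1

/-- The weight `w̄_d(τ)`: the coefficient of `x^d` in `∏_i (1 - (1-x)^{ℓ_i})`,
the product taken over the cycle lengths `ℓ_i` of `τ`. -/
noncomputable def wbar {k : ℕ} (d : ℕ) (τ : Equiv.Perm (Fin k)) : ℤ :=
  (((fullCycleType τ).map fun ℓ =>
    (1 - (1 - Polynomial.X) ^ ℓ : Polynomial ℤ)).prod).coeff d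

/-- `M(X)`: the set of `k`-multisets `[x_1,…,x_k]` for `(x_1,…,x_k) ∈ X`. -/
def MX {D : Type*} [DecidableEq D] {k : ℕ} (X : Finset (Fin k → D)) : Finset (Multiset D) :=
  X.image msetOf

/-- `M̄_d(X)`: multisets in `M(X)` with exactly `d` distinct elements. -/
def Mbar {D : Type*} [DecidableEq D] {k : ℕ} (d : ℕ) (X : Finset (Fin k → D)) :
    Finset (Multiset D) :=
  (MX X).filter fun m => m.toFinset.card = d

section DetOneSubPerm

open Equiv Finset Matrix

variable {α R : Type*} [DecidableEq α] [CommRing R]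

/-- The matrix `1 - y P_τ`, where `P_τ` sends the `j`-th basis vector to the `τ j`-th one. -/
def oneSubPerm (y : R) (τ : Perm α) : Matrix α α R :=
  of fun i j => (if i = j then 1 else 0) - y * (if i = τ j then 1 else 0)

/-- The permutation matrix of `τ` with the columns of the fixed points of `τ` set to zero. -/
def movedPart (R : Type*) [CommRing R] (τ : Perm α) : Matrix α α R :=
  of fun i j => if i = τ j ∧ τ j ≠ j then 1 else 0

lemma movedPart_mul_of_disjoint {σ τ : Perm α} (h : σ.Disjoint τ) :
    movedPart R (σ * τ) = movedPart R σ + movedPart R τ := by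
  ext i j
  simp only [movedPart, of_apply, Matrix.add_apply, Perm.mul_apply]
  rcases h j with hj | hj
  · by_cases hτ : τ j = j
    · simp [hj, hτ]
    · have : σ (τ j) = τ j := (h (τ j)).resolve_right fun h' => hτ (τ.injective h')
      simp [hj, this]
  · simp [hj]

variable [Fintype α]

lemma movedPart_mul_movedPart_of_disjoint {σ τ : Perm α} (h : σ.Disjoint τ) :
    movedPart R σ * movedPart R τ = 0 := by
  ext i j
  simp only [movedPart, mul_apply, of_apply, Matrix.zero_apply]
  refine sum_eq_zero fun l _ => ?_
  by_cases h₁ : i = σ l ∧ σ l ≠ l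
  · have hl : τ l = l := (h l).resolve_left h₁.2
    have h₂ : ¬(l = τ j ∧ τ j ≠ j) := by
      rintro ⟨rfl, h₃⟩
      exact h₃ (τ.injective hl)
    simp [h₂]
  · simp [h₁]

lemma det_one_sub_movedPart_isCycle (y : R) {σ : Perm α} (hσ : σ.IsCycle) :
    (1 - y • movedPart R σ).det = 1 - y ^ #σ.support := by
  have hne : (1 : Perm α) ≠ σ := hσ.ne_one.symm
  rw [det_apply', Fintype.sum_eq_add 1 σ hne]
  · have h₁ : ∀ i : α, (1 - y • movedPart R σ) ((1 : Perm α) i) i = 1 := fun i => by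
      have : ¬(i = σ i ∧ σ i ≠ i) := fun h => h.2 h.1.symm
      simp only [Perm.one_apply, Matrix.sub_apply, Matrix.smul_apply, movedPart, of_apply, if_neg this]
      simp
    have h₂ : ∀ i : α, (1 - y • movedPart R σ) (σ i) i = if i ∈ σ.support then -y else 1 :=
      fun i => by
        by_cases hi : σ i = i <;> simp [movedPart, hi]
    simp_rw [h₁, h₂, prod_ite_mem, univ_inter, hσ.sign]
    simp only [Perm.sign_one, prod_const]
    push_cast
    rw [neg_mul, ← mul_pow]
    simp [sub_eq_add_neg]
  · rintro ρ ⟨hρ₁, hρσ⟩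
    by_contra hprod
    have hρ : ∀ i, ρ i = i ∨ (ρ i = σ i ∧ σ i ≠ i) := fun i => by
      by_contra! hi
      refine hprod (mul_eq_zero_of_right _ (prod_eq_zero (mem_univ i) ?_))
      have : ¬(ρ i = σ i ∧ σ i ≠ i) := fun h => h.2 (hi.2 h.1)
      simp [movedPart, hi.1, this]
    obtain ⟨i₀, hi₀⟩ : ∃ i, ρ i ≠ i := by
      by_contra! h
      exact hρ₁ (Perm.ext h)
    have hi₀' := (hρ i₀).resolve_left hi₀
    have key : ∀ n : ℕ, ρ ((σ ^ n) i₀) = σ ((σ ^ n) i₀) := fun n => by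
      induction n with
      | zero => exact hi₀'.1
      | succ n ih =>
        rw [pow_succ', Perm.mul_apply]
        refine ((hρ _).resolve_left fun h => ?_).1
        have h₁ : σ ((σ ^ n) i₀) = (σ ^ n) i₀ := ρ.injective (h.trans ih.symm)
        have h₂ : (σ ^ n) (σ i₀) = (σ ^ n) i₀ := by
          rw [← Perm.mul_apply, ← pow_succ, pow_succ', Perm.mul_apply, h₁]
        exact hi₀'.2 ((σ ^ n).injective h₂)
    refine hρσ (Perm.ext fun j => ?_)
    by_cases hj : σ j = j
    · rcases hρ j with h | h
      · rw [h, hj]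
      · exact h.1
    · obtain ⟨n, rfl⟩ := hσ.exists_pow_eq hi₀'.2 hj
      exact key n

lemma det_one_sub_movedPart (y : R) (τ : Perm α) :
    (1 - y • movedPart R τ).det = (τ.cycleType.map fun l => 1 - y ^ l).prod := by
  induction τ using Perm.cycle_induction_on with
  | base_one =>
    have : movedPart R (1 : Perm α) = 0 := by ext; simp [movedPart]
    simp [this]
  | base_cycles σ hσ => simp [det_one_sub_movedPart_isCycle y hσ, hσ.cycleType]
  | induction_disjoint σ τ h _ hσ hτ =>
    have : 1 - y • movedPart R (σ * τ) = (1 - y • movedPart R σ) * (1 - y • movedPart R τ) := by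
      rw [movedPart_mul_of_disjoint h, sub_mul, mul_sub, mul_sub, smul_mul_smul_comm,
        movedPart_mul_movedPart_of_disjoint h]
      simp only [mul_one, one_mul, smul_zero, sub_zero, smul_add]
      abel
    rw [this, det_mul, hσ, hτ, h.cycleType_mul, Multiset.map_add, Multiset.prod_add]

/-- The characteristic polynomial of a permutation matrix, in reversed form. -/
lemma det_oneSubPerm (y : R) (τ : Perm α) :
    (oneSubPerm y τ).det =
      (τ.cycleType.map fun l => 1 - y ^ l).prod * (1 - y) ^ (Fintype.card α - #τ.support) := by
  have : oneSubPerm y τ =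
      (1 - y • movedPart R τ) * diagonal fun j => if j ∈ τ.supportᶜ then 1 - y else 1 := by
    ext i j
    rw [mul_diagonal]
    by_cases hj : τ j = j
    · by_cases hi : i = j <;> simp [oneSubPerm, movedPart, hj, hi]
    · simp [oneSubPerm, movedPart, hj, Matrix.one_apply]
  rw [this, det_mul, det_one_sub_movedPart, det_diagonal, prod_ite_mem, univ_inter, prod_const,
    card_compl]

lemma sum_card_perm_fixing [Nonempty α] :
    ∑ a : α, #{σ : Perm α | σ a = a} = (Fintype.card α).factorial := by
  obtain ⟨b⟩ := ‹Nonempty α›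
  have h : ∀ a : α, #{σ : Perm α | σ a = a} = #{σ : Perm α | σ b = a} := fun a =>
    card_equiv (Equiv.mulRight (swap a b)) fun σ => by simp
  simp_rw [h]
  rw [← card_eq_sum_card_fiberwise (fun _ _ => mem_coe.2 (mem_univ _)), card_univ, Fintype.card_perm]

/-- The part of `∑ σ, det (1 - y P_σ)` obtained by choosing the entries of `- y P_σ` exactly in
the columns belonging to `A`. -/
def columnTerm (y : R) (A : Finset α) : R :=
  ∑ p : Perm α × Perm α, ((Perm.sign p.2 : ℤ) : R) *
    ((∏ i ∈ A, -y * (if p.2 i = p.1 i then 1 else 0)) *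
      ∏ i ∈ univ \ A, if p.2 i = i then 1 else 0)

lemma sum_det_oneSubPerm_eq_sum_columnTerm (y : R) :
    ∑ σ : Perm α, (oneSubPerm y σ).det = ∑ A : Finset α, columnTerm y A := by
  simp only [columnTerm]
  rw [sum_comm, Fintype.sum_prod_type]
  refine sum_congr rfl fun σ _ => ?_
  rw [det_apply']
  refine sum_congr rfl fun ρ _ => ?_
  rw [← mul_sum, ← powerset_univ, ← prod_add]
  congr 1
  refine prod_congr rfl fun i _ => ?_
  simp only [oneSubPerm, of_apply]
  ring

lemma columnTerm_eq_zero (y : R) {A : Finset α} (hA : 1 < #A) : columnTerm y A = 0 := by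
  obtain ⟨a, ha, b, hb, hab⟩ := one_lt_card.1 hA
  refine sum_involution (fun p _ => (p.1 * swap a b, p.2 * swap a b)) ?_ ?_ ?_ ?_
  · rintro ⟨σ, ρ⟩ -
    have h₁ : ∏ i ∈ A, -y * (if (ρ * swap a b) i = (σ * swap a b) i then 1 else 0) =
        ∏ i ∈ A, -y * (if ρ i = σ i then 1 else 0) := by
      refine prod_equiv (swap a b) (fun i => ?_) fun i _ => rfl
      rcases eq_or_ne i a with rfl | hia
      · simp [ha, hb]
      rcases eq_or_ne i b with rfl | hib
      · simp [ha, hb]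
      rw [swap_apply_of_ne_of_ne hia hib]
    have h₂ : ∏ i ∈ univ \ A, (if (ρ * swap a b) i = i then (1 : R) else 0) =
        ∏ i ∈ univ \ A, if ρ i = i then 1 else 0 := by
      refine prod_congr rfl fun i hi => ?_
      have hi : i ∉ A := (mem_sdiff.1 hi).2
      rw [Perm.mul_apply, swap_apply_of_ne_of_ne (ne_of_mem_of_not_mem ha hi).symm
        (ne_of_mem_of_not_mem hb hi).symm]
    simp only [h₁, h₂, Perm.sign_mul, Perm.sign_swap hab]
    push_cast
    ring
  · rintro ⟨σ, ρ⟩ - - h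
    have := (Prod.ext_iff.1 h).1
    simp [hab] at this
  · simp
  · rintro ⟨σ, ρ⟩ -
    simp [mul_assoc]

lemma columnTerm_of_card_le_one (y : R) {A : Finset α} (hA : #A ≤ 1) :
    columnTerm y A = (-y) ^ #A * #{σ : Perm α | ∀ i ∈ A, σ i = i} := by
  rw [columnTerm, Fintype.sum_prod_type]
  have h : ∀ σ : Perm α, ∑ ρ : Perm α, ((Perm.sign ρ : ℤ) : R) *
      ((∏ i ∈ A, -y * (if ρ i = σ i then 1 else 0)) * ∏ i ∈ univ \ A, if ρ i = i then 1 else 0) =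
      (-y) ^ #A * if ∀ i ∈ A, σ i = i then 1 else 0 := fun σ => by
    rw [Fintype.sum_eq_single 1]
    · rw [prod_mul_distrib, prod_const, prod_ite_zero]
      simp [eq_comm]
    · intro ρ hρ
      rw [prod_ite_zero, if_neg, mul_zero, mul_zero]
      intro hfix
      refine hρ (Perm.card_support_le_one.1 ((card_le_card fun i hi => ?_).trans hA))
      by_contra hiA
      exact Perm.mem_support.1 hi (hfix i (by simp [hiA]))
  simp_rw [h]
  rw [← mul_sum, sum_boole]

lemma sum_det_oneSubPerm [Nonempty α] (y : R) :
    ∑ σ : Perm α, (oneSubPerm y σ).det = (Fintype.card α).factorial * (1 - y) := by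
  rw [sum_det_oneSubPerm_eq_sum_columnTerm, ← powerset_univ, sum_powerset, card_univ,
    sum_range_succ']
  obtain ⟨n, hn⟩ := Nat.exists_eq_succ_of_ne_zero (Fintype.card_ne_zero (α := α))
  rw [hn, Nat.succ_eq_add_one, sum_range_succ', sum_eq_zero, powersetCard_zero, sum_singleton,
    powersetCard_one, sum_map]
  · simp only [Function.Embedding.coeFn_mk]
    simp_rw [columnTerm_of_card_le_one y (card_singleton _).le]
    rw [columnTerm_of_card_le_one y (by simp)]
    simp only [card_singleton, mem_singleton, forall_eq, pow_one, card_empty, pow_zero]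
    rw [← mul_sum, ← Nat.cast_sum, sum_card_perm_fixing]
    simp [card_univ, Fintype.card_perm, hn]
    ring
  · intro j _
    refine sum_eq_zero fun A hA => columnTerm_eq_zero y ?_
    rw [(mem_powersetCard.1 hA).2]
    omega

/-- The sum of `det (1 - y P_σ)` over the permutations `σ` preserving `h`; these correspond to
families of permutations of the fibers of `h`. -/
lemma sum_det_oneSubPerm_stabilizer {ι : Type*} [Fintype ι] [LinearOrder ι] (y : R) (h : α → ι)
    (hh : Function.Surjective h) :
    ∑ σ ∈ univ.filter fun σ : Perm α => h ∘ σ = h, (oneSubPerm y σ).det =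
      #{σ : Perm α | h ∘ σ = h} * (1 - y) ^ Fintype.card ι := by
  have hcard : #{σ : Perm α | h ∘ σ = h} = ∏ i, (Fintype.card {a // h a = i}).factorial := by
    rw [← DomMulAct.stabilizer_card, Fintype.card_subtype]
  have hne : ∀ i, Nonempty {a // h a = i} := fun i => nonempty_subtype.2 (hh i)
  have hsum : ∑ σ ∈ univ.filter fun σ : Perm α => h ∘ σ = h, (oneSubPerm y σ).det =
      ∑ s : ∀ i, Perm {a // h a = i}, ∏ i, (oneSubPerm y (s i)).det := by
    symm
    refine sum_bij (fun s _ => DomMulAct.stabilizerEquiv_invFun_aux s) ?_ ?_ ?_ ?_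
    · intro s _
      simp only [mem_filter_univ]
      exact funext fun a => DomMulAct.comp_stabilizerEquiv_invFun s a
    · intro s _ t _ hst
      ext i a
      have := Equiv.congr_fun hst a.1
      have e₁ := DomMulAct.stabilizerEquiv_invFun_eq s a.2
      have e₂ := DomMulAct.stabilizerEquiv_invFun_eq t a.2
      exact e₁.symm.trans (this.trans e₂)
    · intro σ hσ
      rw [mem_filter_univ] at hσ
      refine ⟨fun i => σ.subtypePerm fun a => ?_, mem_univ _, ?_⟩
      · rw [← Function.comp_apply (f := h), hσ]
      · ext a
        rfl
    · intro s _
      have hcomp : ∀ a, h (DomMulAct.stabilizerEquiv_invFun_aux s a) = h a :=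
        DomMulAct.comp_stabilizerEquiv_invFun s
      have hblock : (oneSubPerm y (DomMulAct.stabilizerEquiv_invFun_aux s)).BlockTriangular h := by
        intro i j hij
        have h₁ : i ≠ j := fun e => hij.ne (e ▸ rfl)
        have h₂ : i ≠ DomMulAct.stabilizerEquiv_invFun_aux s j := fun e =>
          hij.ne' (e ▸ hcomp j)
        simp [oneSubPerm, h₁, h₂]
      rw [hblock.det_fintype]
      refine prod_congr rfl fun i _ => ?_
      congr 1
      ext a b
      have : (DomMulAct.stabilizerEquiv_invFun_aux s b.1) = s i b :=
        DomMulAct.stabilizerEquiv_invFun_eq s b.2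
      simp [oneSubPerm, toSquareBlock_def, this, Subtype.ext_iff]
  rw [hsum, hcard, ← Fintype.piFinset_univ,
    ← prod_univ_sum (fun _ => univ) fun i (σ : Perm {a // h a = i}) => (oneSubPerm y σ).det]
  simp_rw [sum_det_oneSubPerm]
  rw [prod_mul_distrib, prod_const, card_univ]
  push_cast
  rfl

end DetOneSubPerm

open Finset Polynomial in
lemma sum_wbar_stabilizer {D : Type*} [DecidableEq D] {k : ℕ} (d : ℕ) (x : Fin k → D) :
    ∑ τ ∈ univ.filter fun τ : Equiv.Perm (Fin k) => x ∘ τ = x, wbar d τ =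
      if (msetOf x).toFinset.card = d then (#{τ : Equiv.Perm (Fin k) | x ∘ ⇑τ = x} : ℤ) else 0 := by
  have hprod : ∀ τ : Equiv.Perm (Fin k),
      wbar d τ = (oneSubPerm (1 - X : ℤ[X]) τ).det.coeff d := fun τ => by
    simp [wbar, fullCycleType, det_oneSubPerm]
  have himage : (msetOf x).toFinset = univ.image x := by
    ext; simp [msetOf, List.mem_ofFn]
  let e := (univ.image x).equivFin
  let h : Fin k → Fin #(univ.image x) := fun i => e ⟨x i, mem_image_of_mem x (mem_univ i)⟩
  have hh : Function.Surjective h := fun j => by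
    obtain ⟨i, -, hi⟩ := mem_image.1 (e.symm j).2
    exact ⟨i, by simp [h, hi]⟩
  have hiff : ∀ τ : Equiv.Perm (Fin k), x ∘ ⇑τ = x ↔ h ∘ ⇑τ = h := fun τ => by
    simp [funext_iff, h]
  simp_rw [hprod, hiff]
  rw [← finsetSum_coeff, sum_det_oneSubPerm_stabilizer _ h hh, sub_sub_cancel, Fintype.card_fin,
    himage, ← Polynomial.C_eq_natCast, coeff_C_mul, coeff_X_pow]
  simp [eq_comm]

lemma msetOf_comp_perm {D : Type*} {k : ℕ} (x : Fin k → D) (τ : Equiv.Perm (Fin k)) :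
    msetOf (x ∘ τ) = msetOf x :=
  Multiset.coe_eq_coe.2 (τ.ofFn_comp_perm x)

lemma exists_comp_perm_eq_of_msetOf_eq {D : Type*} [DecidableEq D] {k : ℕ} {x y : Fin k → D}
    (h : msetOf x = msetOf y) : ∃ τ : Equiv.Perm (Fin k), x ∘ τ = y := by
  have hcount : ∀ (z : Fin k → D) (c : D),
      (msetOf z).count c = Fintype.card {i // z i = c} := fun z c => by
    rw [msetOf, ← Fin.univ_val_map, Multiset.count_map, Fintype.card_subtype]
    simp [Finset.card_def, eq_comm]
  have e : ∀ c, Nonempty ({i // y i = c} ≃ {i // x i = c}) := fun c =>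
    Fintype.card_eq.1 (by rw [← hcount, ← hcount, h])
  exact ⟨Equiv.ofFiberEquiv fun c => (e c).some,
    funext fun i => Equiv.ofFiberEquiv_map (fun c => (e c).some) i⟩

open Finset in
/-- The stabilizers of the rearrangements of `x` have total cardinality `k!`. -/
lemma sum_card_stabilizer_of_msetOf_eq {D : Type*} [DecidableEq D] {k : ℕ} {X : Finset (Fin k → D)}
    (hX : ∀ x ∈ X, ∀ τ : Equiv.Perm (Fin k), x ∘ τ ∈ X) {x : Fin k → D} (hx : x ∈ X) :
    ∑ y ∈ X with msetOf y = msetOf x, #{τ : Equiv.Perm (Fin k) | y ∘ ⇑τ = y} = k.factorial := by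
  have h : ∀ y ∈ X.filter fun y => msetOf y = msetOf x,
      #{τ : Equiv.Perm (Fin k) | y ∘ ⇑τ = y} = #{τ : Equiv.Perm (Fin k) | x ∘ ⇑τ = y} := by
    intro y hy
    obtain ⟨σ, rfl⟩ := exists_comp_perm_eq_of_msetOf_eq (mem_filter.1 hy).2.symm
    exact card_equiv (Equiv.mulLeft σ) fun τ => by
      simp only [mem_filter_univ, Equiv.coe_mulLeft, Equiv.Perm.coe_mul, Function.comp_assoc]
  rw [sum_congr rfl h, ← card_eq_sum_card_fiberwise, card_univ, Fintype.card_perm, Fintype.card_fin]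
  intro τ _
  simp [hX x hx τ, msetOf_comp_perm]

/-- **Weighted multiset sieve, distinct-element version.**  If `X ⊆ D^k` is finite and
symmetric, `1 ≤ d ≤ k`, and `f : X → ℂ` is symmetric (hence induces a well-defined value
`g M` on each multiset `M ∈ M(X)`), then
`k!·Σ_{M ∈ M̄_d(X)} f(M) = Σ_{τ ∈ S_k} w̄_d(τ)·Σ_{x ∈ X_τ} f(x)`. -/
theorem weighted_multiset_sieve_distinct {D : Type*} [DecidableEq D] (k d : ℕ)
    (hk : 0 < k) (hd : 0 < d) (hdk : d ≤ k) (X : Finset (Fin k → D))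
    (hX : ∀ x ∈ X, ∀ τ : Equiv.Perm (Fin k), x ∘ τ ∈ X)
    (f : (Fin k → D) → ℂ)
    (hf : ∀ x ∈ X, ∀ τ : Equiv.Perm (Fin k), f (x ∘ τ) = f x)
    (g : Multiset D → ℂ)
    (hg : ∀ x ∈ X, g (msetOf x) = f x) :
    (Nat.factorial k : ℂ) * ∑ m ∈ Mbar d X, g m =
      ∑ τ : Equiv.Perm (Fin k), (wbar d τ : ℂ) *
        ∑ x ∈ X.filter fun x => x ∘ τ = x, f x := by
  have hswap : ∑ τ : Equiv.Perm (Fin k), (wbar d τ : ℂ) * ∑ x ∈ X.filter fun x => x ∘ τ = x, f x =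
      ∑ x ∈ X, f x * ((∑ τ ∈ Finset.univ.filter fun τ : Equiv.Perm (Fin k) => x ∘ τ = x,
        wbar d τ : ℤ) : ℂ) := by
    simp_rw [Finset.sum_filter, Finset.mul_sum]
    rw [Finset.sum_comm]
    refine Finset.sum_congr rfl fun x _ => ?_
    push_cast
    rw [Finset.mul_sum]
    refine Finset.sum_congr rfl fun τ _ => ?_
    split_ifs <;> simp [mul_comm]
  have hmaps : ∀ x ∈ X.filter fun x => (msetOf x).toFinset.card = d, msetOf x ∈ Mbar d X := by
    intro x hx
    rw [Finset.mem_filter] at hx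
    exact Finset.mem_filter.2 ⟨Finset.mem_image_of_mem _ hx.1, hx.2⟩
  simp_rw [hswap, sum_wbar_stabilizer]
  push_cast
  simp_rw [mul_ite, mul_zero]
  rw [← Finset.sum_filter, ← Finset.sum_fiberwise_of_maps_to hmaps, Finset.mul_sum]
  refine Finset.sum_congr rfl fun m hm => ?_
  obtain ⟨hmX, hmd⟩ := Finset.mem_filter.1 hm
  obtain ⟨x, hx, rfl⟩ := Finset.mem_image.1 hmX
  rw [← sum_card_stabilizer_of_msetOf_eq hX hx, Nat.cast_sum, Finset.sum_mul, Finset.filter_filter]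
  refine Finset.sum_congr (Finset.filter_congr fun y _ => ?_) fun y hy => ?_
  · exact ⟨fun h => ⟨h ▸ hmd, h⟩, fun h => h.2⟩
  · rw [Finset.mem_filter] at hy
    rw [← hg y hy.1, hy.2.2, mul_comm]
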